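/- arXiv:1810.11386 — 6 statements merged into one kernel-verified Lean document; each statement's English description precedes it below -/
import Mathlib

section
/- Let r ≥ 2 be an integer, let k_1, …, k_r be integers each at least 2, and let i be an index with 1 ≤ i < r. Then R(k_1, …, k_r) > (R(k_1, …, k_i) − 1) · (R(k_{i+1}, …, k_r) − 1). -/
open Filter Topology
open scoped ENNReal

/-- `N` has the Ramsey property for the tuple `k`: every `r`-coloring of the
edges of the complete graph on `N` vertices admits a color `i` and a set of
`k i` vertices all of whose connecting edges have color `i`. -/
def ramseyProp {r : ℕ} (k : Fin r → ℕ) (N : ℕ) : Prop :=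
  ∀ c : Sym2 (Fin N) → Fin r, ∃ i : Fin r, ∃ S : Finset (Fin N),
    S.card = k i ∧ ∀ u ∈ S, ∀ v ∈ S, u ≠ v → c s(u, v) = i

/-- The multicolor Ramsey number `R(k 0, …, k (r-1))`: the least positive `N`
with the Ramsey property. -/
noncomputable def multiRamsey {r : ℕ} (k : Fin r → ℕ) : ℕ :=
  sInf {N | 0 < N ∧ ramseyProp k N}

/-- The diagonal multicolor Ramsey number `R_r(k)`. -/
noncomputable def diagRamsey (r k : ℕ) : ℕ :=
  multiRamsey (fun _ : Fin r => k)

/-- DC, the "decreasing conjecture". -/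
def DC : Prop :=
  ∀ (r : ℕ), 2 ≤ r → ∀ k : Fin r → ℕ, (∀ l, 2 ≤ k l) →
    ∀ i j : Fin r, i ≠ j → 3 ≤ k i → k i ≤ k j →
      multiRamsey (fun l => if l = i then k i - 1 else if l = j then k j + 1 else k l)
        ≤ multiRamsey k

/-- Ramsey's theorem for several colors, in a form relative to a finite set of vertices. -/
theorem exists_monochromatic_of_large_card {V : Type*} [DecidableEq V] {r : ℕ} (k : Fin r → ℕ) :
    ∃ N, ∀ (c : Sym2 V → Fin r) (T : Finset V), N ≤ T.card →
      ∃ i, ∃ S ⊆ T, S.card = k i ∧ ∀ u ∈ S, ∀ v ∈ S, u ≠ v → c s(u, v) = i := by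
  induction hs : ∑ i, k i using Nat.strong_induction_on generalizing k with
  | _ s ih =>
    by_cases h0 : ∃ i, k i = 0
    · obtain ⟨i, hi⟩ := h0
      exact ⟨0, fun c T _ => ⟨i, ∅, by simp, by simp [hi], by simp⟩⟩
    · push Not at h0
      have step : ∀ j, ∃ N, ∀ (c : Sym2 V → Fin r) (T : Finset V), N ≤ T.card →
          ∃ i, ∃ S ⊆ T, S.card = Function.update k j (k j - 1) i ∧
            ∀ u ∈ S, ∀ v ∈ S, u ≠ v → c s(u, v) = i := by
        intro j
        refine ih _ ?_ _ rfl
        rw [← hs]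
        refine Finset.sum_lt_sum (fun i _ => ?_) ⟨j, Finset.mem_univ j, ?_⟩
        · rcases eq_or_ne i j with rfl | h
          · simp
          · simp [h]
        · have := h0 j
          simp only [Function.update_self]
          omega
      choose N hN using step
      refine ⟨1 + ∑ j, N j, fun c T hT => ?_⟩
      obtain ⟨v, hv⟩ : T.Nonempty := Finset.card_pos.mp (by omega)
      have hcard : ∑ j, N j ≤ ∑ j, ((T.erase v).filter (fun u => c s(v, u) = j)).card := by
        rw [← Finset.card_eq_sum_card_fiberwise (fun _ _ => Finset.mem_coe.2 (Finset.mem_univ _)),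
          Finset.card_erase_of_mem hv]
        omega
      obtain ⟨j, -, hj⟩ := Finset.exists_le_of_sum_le ⟨c s(v, v), Finset.mem_univ _⟩ hcard
      obtain ⟨i, S, hST, hS, hc⟩ := hN j c _ hj
      have hmem : ∀ u ∈ S, u ≠ v ∧ u ∈ T ∧ c s(v, u) = j := fun u hu => by
        simpa [and_assoc] using hST hu
      rcases eq_or_ne i j with rfl | hij
      · have hvS : v ∉ S := fun h => (hmem v h).1 rfl
        refine ⟨i, insert v S, ?_, ?_, ?_⟩
        · exact Finset.insert_subset hv fun u hu => (hmem u hu).2.1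
        · have := h0 i
          rw [Function.update_self] at hS
          rw [Finset.card_insert_of_notMem hvS]
          omega
        · intro u hu w hw huw
          rcases Finset.mem_insert.1 hu with rfl | huS
          · rcases Finset.mem_insert.1 hw with rfl | hw
            · exact absurd rfl huw
            · exact (hmem w hw).2.2
          · rcases Finset.mem_insert.1 hw with rfl | hw
            · rw [Sym2.eq_swap]
              exact (hmem u huS).2.2
            · exact hc u huS w hw huw
      · exact ⟨i, S, fun u hu => (hmem u hu).2.1, by simpa [hij] using hS, hc⟩

theorem exists_pos_ramseyProp {r : ℕ} (k : Fin r → ℕ) : ∃ N, 0 < N ∧ ramseyProp k N := by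
  obtain ⟨N, hN⟩ := exists_monochromatic_of_large_card (V := ℕ) k
  refine ⟨N + 1, N.succ_pos, fun c => ?_⟩
  obtain ⟨i, S, hS, hcard, hc⟩ := hN (fun e => c (e.map (Fin.ofNat (N + 1))))
    (Finset.range (N + 1)) (by simp)
  have hinj : Set.InjOn (Fin.ofNat (N + 1)) (S : Set ℕ) := by
    intro x hx y hy hxy
    have hx' := Finset.mem_range.1 (hS hx)
    have hy' := Finset.mem_range.1 (hS hy)
    simpa [Fin.ext_iff, Nat.mod_eq_of_lt hx', Nat.mod_eq_of_lt hy'] using hxy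
  refine ⟨i, S.image (Fin.ofNat (N + 1)), by rw [Finset.card_image_of_injOn hinj, hcard], ?_⟩
  simp only [Finset.forall_mem_image]
  intro u hu v hv huv
  exact hc u hu v hv (fun h => huv (h ▸ rfl))

theorem multiRamsey_mem {r : ℕ} (k : Fin r → ℕ) :
    0 < multiRamsey k ∧ ramseyProp k (multiRamsey k) :=
  Nat.sInf_mem (exists_pos_ramseyProp k)

theorem not_ramseyProp_of_pos_of_lt {r N : ℕ} {k : Fin r → ℕ} (hN : 0 < N)
    (h : N < multiRamsey k) : ¬ ramseyProp k N :=
  fun hr => Nat.notMem_of_lt_sInf h ⟨hN, hr⟩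

/-- The lexicographic product of two colorings: pairs of vertices with distinct first coordinates
are colored by the first coloring, all other pairs by the second one. -/
theorem ramseyProp_or_of_append {a b L M N : ℕ} {k₁ : Fin a → ℕ} {k₂ : Fin b → ℕ}
    (hL : L ≤ M * N) (h : ramseyProp (Fin.append k₁ k₂) L) :
    ramseyProp k₁ M ∨ ramseyProp k₂ N := by
  by_contra! hcon
  obtain ⟨h₁, h₂⟩ := hcon
  simp only [ramseyProp, not_forall] at h₁ h₂
  obtain ⟨c₁, h₁⟩ := h₁
  obtain ⟨c₂, h₂⟩ := h₂
  let f : Fin L → Fin M × Fin N := fun x => finProdFinEquiv.symm (Fin.castLE hL x)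
  have hf : Function.Injective f :=
    finProdFinEquiv.symm.injective.comp (Fin.castLE_injective hL)
  obtain ⟨i, S, hS, hc⟩ := h fun e =>
    if (e.map fun x => (f x).1).IsDiag then Fin.natAdd a (c₂ (e.map fun x => (f x).2))
    else Fin.castAdd b (c₁ (e.map fun x => (f x).1))
  simp only [Sym2.map_mk, Sym2.mk_isDiag_iff] at hc
  induction i using Fin.addCases with
  | left i =>
    have hne : ∀ u ∈ S, ∀ v ∈ S, u ≠ v → (f u).1 ≠ (f v).1 := by
      intro u hu v hv huv heq
      have := hc u hu v hv huv
      rw [if_pos heq, Fin.ext_iff] at this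
      simp only [Fin.val_natAdd, Fin.val_castAdd] at this
      omega
    refine h₁ ⟨i, S.image fun x => (f x).1, ?_, ?_⟩
    · rw [Finset.card_image_of_injOn, hS, Fin.append_left]
      exact fun u hu v hv huv => by_contra fun h => hne u hu v hv h huv
    · simp only [Finset.forall_mem_image]
      intro u hu v hv huv
      have := hc u hu v hv (fun h => huv (h ▸ rfl))
      rw [if_neg huv] at this
      exact Fin.castAdd_injective a b this
  | right i =>
    have heq : ∀ u ∈ S, ∀ v ∈ S, u ≠ v → (f u).1 = (f v).1 := by
      intro u hu v hv huv
      by_contra hne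
      have := hc u hu v hv huv
      rw [if_neg hne, Fin.ext_iff] at this
      simp only [Fin.val_natAdd, Fin.val_castAdd] at this
      omega
    refine h₂ ⟨i, S.image fun x => (f x).2, ?_, ?_⟩
    · rw [Finset.card_image_of_injOn, hS, Fin.append_right]
      exact fun u hu v hv huv => by_contra fun h => h (hf (Prod.ext (heq u hu v hv h) huv))
    · simp only [Finset.forall_mem_image]
      intro u hu v hv huv
      have hne : u ≠ v := fun h => huv (h ▸ rfl)
      have := hc u hu v hv hne
      rw [if_pos (heq u hu v hv hne)] at this
      exact Fin.natAdd_injective b a this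

/-- For tuples `k₁` of length `a ≥ 1` and `k₂` of length `b ≥ 1`
(so `r = a + b ≥ 2` and the split index `i = a` satisfies `1 ≤ i < r`), with all
entries at least `2`,
`R(k₁ ++ k₂) > (R(k₁) − 1) · (R(k₂) − 1)`. -/
theorem stmt0 {a b : ℕ} (ha : 1 ≤ a) (hb : 1 ≤ b)
    (k₁ : Fin a → ℕ) (k₂ : Fin b → ℕ)
    (hk₁ : ∀ l, 2 ≤ k₁ l) (hk₂ : ∀ l, 2 ≤ k₂ l) :
    (multiRamsey k₁ - 1) * (multiRamsey k₂ - 1) < multiRamsey (Fin.append k₁ k₂) := by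
  obtain ⟨hpos, hprop⟩ := multiRamsey_mem (Fin.append k₁ k₂)
  by_contra! hle
  have hmul := hpos.trans_le hle
  have hM := Nat.pos_of_mul_pos_right hmul
  have hN := Nat.pos_of_mul_pos_left hmul
  rcases ramseyProp_or_of_append hle hprop with h | h
  · exact not_ramseyProp_of_pos_of_lt (by omega) (by omega) h
  · exact not_ramseyProp_of_pos_of_lt (by omega) (by omega) h
end

section
/- For every integer k ≥ 2, the sequence r ↦ R_r(k)^{1/r} converges in the extended nonnegative reals [0, +∞] as r → ∞, and its limit equals sup_{r ≥ 1} (R_r(k) − 1)^{1/r}. -/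
open Filter Topology
open scoped ENNReal

/-- The finite multicolor Ramsey theorem, for finite subsets of an arbitrary vertex type. -/
theorem exists_card_le_imp_monochromatic {r : ℕ} (k : Fin r → ℕ) :
    ∃ N : ℕ, 0 < N ∧ ∀ {V : Type*} (c : Sym2 V → Fin r) (A : Finset V), N ≤ A.card →
      ∃ i : Fin r, ∃ S ⊆ A, S.card = k i ∧ ∀ u ∈ S, ∀ v ∈ S, u ≠ v → c s(u, v) = i := by
  classical
  induction hn : ∑ i, k i using Nat.strong_induction_on generalizing k with
  | _ n ih =>
  by_cases h0 : ∃ i, k i = 0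
  · obtain ⟨i, hi⟩ := h0
    exact ⟨1, one_pos, fun c A _ => ⟨i, ∅, by simp, by simp [hi], by simp⟩⟩
  push Not at h0
  have hdec : ∀ i : Fin r, ∑ j, Function.update k i (k i - 1) j < n := by
    intro i
    rw [← hn]
    refine Finset.sum_lt_sum (fun j _ => ?_) ⟨i, Finset.mem_univ i, ?_⟩
    · by_cases hj : j = i
      · subst hj; simp
      · simp [hj]
    · have := h0 i
      simp only [Function.update_self]
      omega
  choose M hM0 hM using fun i => ih _ (hdec i) (Function.update k i (k i - 1)) rfl
  refine ⟨1 + ∑ i, M i, by omega, fun {V} c A hA => ?_⟩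
  obtain ⟨x, hx⟩ : A.Nonempty := Finset.card_pos.mp (by omega)
  obtain ⟨i, hi⟩ : ∃ i : Fin r, M i ≤ ((A.erase x).filter fun y => c s(x, y) = i).card := by
    by_contra! hlt
    have hfib := Finset.card_eq_sum_card_fiberwise (s := A.erase x) (t := Finset.univ)
      (f := fun y => c s(x, y)) (by simp)
    rw [Finset.card_erase_of_mem hx] at hfib
    have hle : ∑ i, ((A.erase x).filter fun y => c s(x, y) = i).card < ∑ i, M i :=
      Finset.sum_lt_sum_of_nonempty ⟨c s(x, x), Finset.mem_univ _⟩ fun i _ => hlt i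
    omega
  obtain ⟨j, S, hSA, hcard, hmono⟩ := hM i c _ hi
  have hSA' : ∀ y ∈ S, (y ≠ x ∧ y ∈ A) ∧ c s(x, y) = i := fun y hy => by
    simpa using hSA hy
  by_cases hj : j = i
  · subst hj
    have hxS : x ∉ S := fun h => (hSA' x h).1.1 rfl
    refine ⟨j, insert x S, ?_, ?_, ?_⟩
    · intro y hy
      rcases Finset.mem_insert.mp hy with rfl | hy
      · exact hx
      · exact (hSA' y hy).1.2
    · have := h0 j
      rw [Function.update_self] at hcard
      rw [Finset.card_insert_of_notMem hxS]
      omega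
    · intro u hu v hv huv
      rcases Finset.mem_insert.mp hu with hux | huS <;>
        rcases Finset.mem_insert.mp hv with hvx | hvS
      · exact absurd (hux.trans hvx.symm) huv
      · exact hux ▸ (hSA' v hvS).2
      · rw [Sym2.eq_swap, hvx]; exact (hSA' u huS).2
      · exact hmono u huS v hvS huv
  · exact ⟨j, S, fun y hy => (hSA' y hy).1.2, by simpa [hj] using hcard, hmono⟩

theorem ramseyProp.mono {r : ℕ} {k : Fin r → ℕ} {M N : ℕ} (h : ramseyProp k M) (hMN : M ≤ N) :
    ramseyProp k N := by
  intro c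
  obtain ⟨i, S, hS, hmono⟩ := h fun e => c (e.map (Fin.castLE hMN))
  refine ⟨i, S.map (Fin.castLEEmb hMN), by simpa using hS, ?_⟩
  intro u hu v hv huv
  obtain ⟨u, huS, rfl⟩ := Finset.mem_map.mp hu
  obtain ⟨v, hvS, rfl⟩ := Finset.mem_map.mp hv
  exact hmono u huS v hvS fun h => huv (h ▸ rfl)

theorem lt_multiRamsey_of_not_ramseyProp {r : ℕ} {k : Fin r → ℕ} {N : ℕ} (h : ¬ ramseyProp k N) :
    N < multiRamsey k :=
  lt_of_not_ge fun hle => h ((multiRamsey_mem k).2.mono hle)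

theorem not_ramseyProp_diagRamsey_sub_one {r k : ℕ} (hr : 1 ≤ r) (hk : 2 ≤ k) :
    ¬ ramseyProp (fun _ : Fin r => k) (diagRamsey r k - 1) := by
  intro h
  rcases Nat.eq_zero_or_pos (diagRamsey r k - 1) with h0 | hpos
  · rw [h0] at h
    obtain ⟨i, S, hS, -⟩ := h fun _ => ⟨0, hr⟩
    have := S.card_le_univ
    simp only [Fintype.card_fin, hS] at this
    omega
  · have : diagRamsey r k ≤ diagRamsey r k - 1 := Nat.sInf_le ⟨hpos, h⟩
    omega

/-- Lexicographic product of colorings with disjoint palettes. -/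
theorem not_ramseyProp_mul {r s k a b : ℕ} (ha : ¬ ramseyProp (fun _ : Fin r => k) a)
    (hb : ¬ ramseyProp (fun _ : Fin s => k) b) :
    ¬ ramseyProp (fun _ : Fin (r + s) => k) (a * b) := by
  classical
  unfold ramseyProp at ha hb
  push Not at ha hb
  obtain ⟨c, hc⟩ := ha
  obtain ⟨d, hd⟩ := hb
  intro h
  let p : Fin (a * b) → Fin a := fun x => (finProdFinEquiv.symm x).1
  let q : Fin (a * b) → Fin b := fun x => (finProdFinEquiv.symm x).2
  have hpq : ∀ x y, p x = p y → q x = q y → x = y := fun x y h₁ h₂ =>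
    finProdFinEquiv.symm.injective (Prod.ext h₁ h₂)
  obtain ⟨i, S, hS, hmono⟩ := h fun e =>
    if (e.map p).IsDiag then Fin.natAdd r (d (e.map q)) else Fin.castAdd s (c (e.map p))
  simp only [Sym2.map_mk, Sym2.mk_isDiag_iff] at hmono
  induction i using Fin.addCases with
  | left i =>
    have hp : ∀ u ∈ S, ∀ v ∈ S, u ≠ v → p u ≠ p v ∧ c s(p u, p v) = i := by
      intro u hu v hv huv
      have := hmono u hu v hv huv
      split_ifs at this with hpe
      · exact absurd (congrArg Fin.val this) (by simp; omega)
      · exact ⟨hpe, Fin.castAdd_injective r s this⟩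
    obtain ⟨u', hu, v', hv, huv, hne⟩ := hc i (S.image p) (by
      rw [Finset.card_image_of_injOn, hS]
      intro u hu v hv huv
      by_contra hne
      exact (hp u hu v hv hne).1 huv)
    obtain ⟨u, huS, rfl⟩ := Finset.mem_image.mp hu
    obtain ⟨v, hvS, rfl⟩ := Finset.mem_image.mp hv
    exact hne (hp u huS v hvS fun h => huv (h ▸ rfl)).2
  | right i =>
    have hq : ∀ u ∈ S, ∀ v ∈ S, u ≠ v → p u = p v ∧ d s(q u, q v) = i := by
      intro u hu v hv huv
      have := hmono u hu v hv huv
      split_ifs at this with hpe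
      · exact ⟨hpe, Fin.natAdd_injective s r this⟩
      · exact absurd (congrArg Fin.val this) (by simp; omega)
    obtain ⟨u', hu, v', hv, huv, hne⟩ := hd i (S.image q) (by
      rw [Finset.card_image_of_injOn, hS]
      intro u hu v hv huv
      by_contra hne
      exact hne (hpq u v (hq u hu v hv hne).1 huv))
    obtain ⟨u, huS, rfl⟩ := Finset.mem_image.mp hu
    obtain ⟨v, hvS, rfl⟩ := Finset.mem_image.mp hv
    exact hne (hq u huS v hvS fun h => huv (h ▸ rfl)).2

theorem diagRamsey_sub_one_mul_le {r s k : ℕ} (hr : 1 ≤ r) (hs : 1 ≤ s) (hk : 2 ≤ k) :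
    (diagRamsey r k - 1) * (diagRamsey s k - 1) ≤ diagRamsey (r + s) k - 1 :=
  Nat.le_sub_one_of_lt <| lt_multiRamsey_of_not_ramseyProp <|
    not_ramseyProp_mul (not_ramseyProp_diagRamsey_sub_one hr hk)
      (not_ramseyProp_diagRamsey_sub_one hs hk)

theorem one_le_diagRamsey_sub_one {r k : ℕ} (hr : 1 ≤ r) (hk : 2 ≤ k) :
    1 ≤ diagRamsey r k - 1 := by
  refine Nat.le_sub_one_of_lt <| lt_multiRamsey_of_not_ramseyProp fun h => ?_
  obtain ⟨i, S, hS, -⟩ := h fun _ => ⟨0, hr⟩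
  have := S.card_le_univ
  simp only [Fintype.card_fin, hS] at this
  omega

/-- Fekete's lemma in multiplicative form, with values in `[0, ∞]`: a supermultiplicative sequence
of positive integers has a growth rate, which is allowed to be infinite. -/
theorem tendsto_add_one_rpow_of_supermultiplicative {a : ℕ → ℕ} (hpos : ∀ n, 1 ≤ n → 1 ≤ a n)
    (hmul : ∀ m n, 1 ≤ m → 1 ≤ n → a m * a n ≤ a (m + n)) :
    Tendsto (fun n : ℕ => ((a n + 1 : ℕ) : ℝ≥0∞) ^ (1 / (n : ℝ))) atTop
      (𝓝 (⨆ (n : ℕ) (_ : 1 ≤ n), (a n : ℝ≥0∞) ^ (1 / (n : ℝ)))) := by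
  set L : ℝ≥0∞ := ⨆ (n : ℕ) (_ : 1 ≤ n), (a n : ℝ≥0∞) ^ (1 / (n : ℝ))
  have hinv : Tendsto (fun n : ℕ => 1 / (n : ℝ)) atTop (𝓝 0) := tendsto_one_div_atTop_nhds_zero_nat
  have hcont : ∀ b : ℕ, 1 ≤ b → ∀ {e : ℕ → ℝ} {x : ℝ}, Tendsto e atTop (𝓝 x) →
      Tendsto (fun n => (b : ℝ≥0∞) ^ e n) atTop (𝓝 ((b : ℝ≥0∞) ^ x)) := by
    intro b hb e x he
    have hb' : (0 : ℝ) < b := by exact_mod_cast hb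
    have hcast : ∀ y : ℝ, (b : ℝ≥0∞) ^ y = ENNReal.ofReal ((b : ℝ) ^ y) := fun y => by
      rw [← ENNReal.ofReal_rpow_of_pos hb', ENNReal.ofReal_natCast]
    simp only [hcast]
    exact ENNReal.tendsto_ofReal (tendsto_const_nhds.rpow he (Or.inl hb'.ne'))
  rw [tendsto_order]
  constructor
  · intro x hx
    obtain ⟨m, hm⟩ := lt_iSup_iff.mp hx
    obtain ⟨hm1, hm⟩ := lt_iSup_iff.mp hm
    have hpow : ∀ q t : ℕ, a m ^ q ≤ a (m * q + (t + 1)) := by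
      intro q t
      induction q with
      | zero => simpa using hpos (t + 1) (by omega)
      | succ q ih =>
        calc a m ^ (q + 1) = a m * a m ^ q := pow_succ' _ _
          _ ≤ a m * a (m * q + (t + 1)) := Nat.mul_le_mul_left _ ih
          _ ≤ a (m + (m * q + (t + 1))) := hmul _ _ hm1 (by omega)
          _ = a (m * (q + 1) + (t + 1)) := by congr 1; ring
    have hlim : Tendsto (fun n : ℕ => (a m : ℝ≥0∞) ^ (1 / (m : ℝ) - 1 / (n : ℝ))) atTop
        (𝓝 ((a m : ℝ≥0∞) ^ (1 / (m : ℝ)))) :=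
      hcont _ (hpos m hm1) (by simpa using hinv.const_sub (1 / (m : ℝ)))
    filter_upwards [(tendsto_order.mp hlim).1 x hm, eventually_ge_atTop 1] with n hn hn1
    refine hn.trans_le ?_
    have hdiv : m * ((n - 1) / m) + ((n - 1) % m + 1) = n := by
      have := Nat.div_add_mod (n - 1) m
      omega
    have hmod : (n - 1) % m < m := Nat.mod_lt _ hm1
    have hle := hpow ((n - 1) / m) ((n - 1) % m)
    rw [hdiv] at hle
    set q := (n - 1) / m
    have hmpos : (0 : ℝ) < m := by exact_mod_cast hm1
    have hnpos : (0 : ℝ) < n := by exact_mod_cast hn1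
    have hexp : 1 / (m : ℝ) - 1 / (n : ℝ) ≤ q * (1 / (n : ℝ)) := by
      have hnq : (n : ℝ) ≤ m * q + m := by exact_mod_cast (by omega : n ≤ m * q + m)
      rw [div_sub_div _ _ hmpos.ne' hnpos.ne', mul_one_div, div_le_div_iff₀ (by positivity) hnpos]
      nlinarith [mul_le_mul_of_nonneg_left hnq hnpos.le]
    calc (a m : ℝ≥0∞) ^ (1 / (m : ℝ) - 1 / (n : ℝ))
        ≤ (a m : ℝ≥0∞) ^ (q * (1 / (n : ℝ))) :=
          ENNReal.rpow_le_rpow_of_exponent_le (by exact_mod_cast hpos m hm1) hexp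
      _ = ((a m ^ q : ℕ) : ℝ≥0∞) ^ (1 / (n : ℝ)) := by
          rw [ENNReal.rpow_mul, ENNReal.rpow_natCast, Nat.cast_pow]
      _ ≤ ((a n + 1 : ℕ) : ℝ≥0∞) ^ (1 / (n : ℝ)) :=
          ENNReal.rpow_le_rpow (by exact_mod_cast hle.trans (Nat.le_succ _)) (by positivity)
  · intro x hx
    have hlim : Tendsto (fun n : ℕ => ((2 : ℕ) : ℝ≥0∞) ^ (1 / (n : ℝ)) * L) atTop (𝓝 L) := by
      have h2 := hcont 2 (by norm_num) hinv
      rw [ENNReal.rpow_zero] at h2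
      simpa using ENNReal.Tendsto.mul_const h2 (Or.inl one_ne_zero)
    filter_upwards [(tendsto_order.mp hlim).2 x hx, eventually_ge_atTop 1] with n hn hn1
    refine lt_of_le_of_lt ?_ hn
    have ha := hpos n hn1
    calc ((a n + 1 : ℕ) : ℝ≥0∞) ^ (1 / (n : ℝ))
        ≤ ((2 * a n : ℕ) : ℝ≥0∞) ^ (1 / (n : ℝ)) :=
          ENNReal.rpow_le_rpow (by exact_mod_cast (by omega : a n + 1 ≤ 2 * a n)) (by positivity)
      _ = ((2 : ℕ) : ℝ≥0∞) ^ (1 / (n : ℝ)) * (a n : ℝ≥0∞) ^ (1 / (n : ℝ)) := by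
          rw [Nat.cast_mul, ENNReal.mul_rpow_of_nonneg _ _ (by positivity)]
      _ ≤ ((2 : ℕ) : ℝ≥0∞) ^ (1 / (n : ℝ)) * L := by
          gcongr
          exact le_iSup₂ (f := fun (n : ℕ) (_ : 1 ≤ n) => (a n : ℝ≥0∞) ^ (1 / (n : ℝ))) n hn1

/-- for every `k ≥ 2` the sequence `r ↦ R_r(k)^{1/r}` converges in
`[0, ∞]` and its limit equals `⨆ (r ≥ 1), (R_r(k) − 1)^{1/r}`. -/
theorem stmt2 (k : ℕ) (hk : 2 ≤ k) :
    Tendsto (fun r : ℕ => ((diagRamsey r k : ℝ≥0∞)) ^ (1 / (r : ℝ))) atTop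
      (𝓝 (⨆ (r : ℕ) (_ : 1 ≤ r), ((diagRamsey r k - 1 : ℕ) : ℝ≥0∞) ^ (1 / (r : ℝ)))) := by
  have h := tendsto_add_one_rpow_of_supermultiplicative (a := fun r => diagRamsey r k - 1)
    (fun r hr => one_le_diagRamsey_sub_one hr hk)
    (fun r s hr hs => diagRamsey_sub_one_mul_le hr hs hk)
  refine h.congr fun r => ?_
  have hpos : 0 < diagRamsey r k := (multiRamsey_mem _).1
  rw [Nat.sub_add_cancel hpos]
end

section
/- If DC holds, then for all integers k ≥ 3 and r ≥ 1, R_{2r}(k) ≥ R(k−1, …, k−1, k+1, …, k+1), where on the right-hand side there are r arguments equal to k−1 followed by r arguments equal to k+1. -/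
open Filter Topology
open scoped ENNReal

/-- The tuple obtained from the constant tuple `k` of length `r + r` by lowering the first `m`
entries of the first half by one and raising the first `m` entries of the second half by one. -/
def shiftedTuple (r k m : ℕ) : Fin (r + r) → ℕ :=
  Fin.append (fun i : Fin r => if (i : ℕ) < m then k - 1 else k)
    (fun i : Fin r => if (i : ℕ) < m then k + 1 else k)

theorem two_le_shiftedTuple {r k m : ℕ} (hk : 3 ≤ k) (l : Fin (r + r)) :
    2 ≤ shiftedTuple r k m l := by
  induction l using Fin.addCases <;>
    simp only [shiftedTuple, Fin.append_left, Fin.append_right] <;> split_ifs <;> omega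

theorem shiftedTuple_succ {r k m : ℕ} (hm : m < r) :
    shiftedTuple r k (m + 1) = fun l =>
      if l = Fin.castAdd r ⟨m, hm⟩ then shiftedTuple r k m (Fin.castAdd r ⟨m, hm⟩) - 1
      else if l = Fin.natAdd r ⟨m, hm⟩ then shiftedTuple r k m (Fin.natAdd r ⟨m, hm⟩) + 1
      else shiftedTuple r k m l := by
  funext l
  induction l using Fin.addCases <;>
    simp only [shiftedTuple, Fin.append_left, Fin.append_right, Fin.ext_iff, Fin.val_castAdd,
      Fin.val_natAdd] <;>
    split_ifs <;> omega

theorem multiRamsey_shiftedTuple_succ_le (hDC : DC) {r k m : ℕ} (hk : 3 ≤ k) (hm : m < r) :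
    multiRamsey (shiftedTuple r k (m + 1)) ≤ multiRamsey (shiftedTuple r k m) := by
  rw [shiftedTuple_succ hm]
  refine hDC (r + r) (by omega) _ (two_le_shiftedTuple hk) _ _ ?_ ?_ ?_
  · simp only [ne_eq, Fin.ext_iff, Fin.val_castAdd, Fin.val_natAdd]
    omega
  · simpa only [shiftedTuple, Fin.append_left, lt_irrefl, if_false] using hk
  · simp only [shiftedTuple, Fin.append_left, Fin.append_right, lt_irrefl, if_false, le_refl]

theorem multiRamsey_shiftedTuple_le (hDC : DC) {r k m : ℕ} (hk : 3 ≤ k) (hm : m ≤ r) :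
    multiRamsey (shiftedTuple r k m) ≤ diagRamsey (r + r) k := by
  induction m with
  | zero =>
    have h : shiftedTuple r k 0 = fun _ => k := by
      funext l
      induction l using Fin.addCases <;>
        simp only [shiftedTuple, Fin.append_left, Fin.append_right, Nat.not_lt_zero, if_false]
    rw [h, diagRamsey]
  | succ m ih => exact (multiRamsey_shiftedTuple_succ_le hDC hk hm).trans (ih (by omega))

/-- if DC holds, then `R_{2r}(k) ≥ R(k−1, …, k−1, k+1, …, k+1)`,
with `r` entries `k−1` followed by `r` entries `k+1`. -/
theorem stmt3 (hDC : DC) (k : ℕ) (hk : 3 ≤ k) (r : ℕ) (hr : 1 ≤ r) :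
    multiRamsey (Fin.append (fun _ : Fin r => k - 1) (fun _ : Fin r => k + 1))
      ≤ diagRamsey (2 * r) k := by
  rw [two_mul]
  simpa [shiftedTuple] using multiRamsey_shiftedTuple_le hDC hk (le_refl r)
end

section
/- If DC holds and L_3 is finite, then for every integer k ≥ 3 the limit L_k is finite. -/
open Filter Topology
open scoped ENNReal

/-- The tuple obtained from `r` blocks of `D + 1` threes by raising the first entry of
block `a` by `m a` at the expense of lowering the next `m a` entries of that block to two. -/
def blockTuple (r D : ℕ) (m : Fin r → ℕ) (x : Fin (r * (D + 1))) : ℕ :=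
  if (finProdFinEquiv.symm x).2 = 0 then 3 + m (finProdFinEquiv.symm x).1
  else if ((finProdFinEquiv.symm x).2 : ℕ) ≤ m (finProdFinEquiv.symm x).1 then 2 else 3

lemma two_le_blockTuple (r D : ℕ) (m : Fin r → ℕ) (x : Fin (r * (D + 1))) :
    2 ≤ blockTuple r D m x := by
  unfold blockTuple
  split_ifs <;> omega

lemma blockTuple_zero (r D : ℕ) : blockTuple r D 0 = fun _ => 3 := by
  funext x
  unfold blockTuple
  split_ifs with h₁ h₂
  · simp
  · exact absurd (Fin.ext (by simpa using h₂)) h₁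
  · rfl

/-- One application of DC inside the block `a`. -/
lemma multiRamsey_blockTuple_update_le (hDC : DC) {r D : ℕ} (m : Fin r → ℕ) (a : Fin r)
    (ha : m a < D) :
    multiRamsey (blockTuple r D (Function.update m a (m a + 1)))
      ≤ multiRamsey (blockTuple r D m) := by
  set b : Fin (D + 1) := ⟨m a + 1, by omega⟩ with hb
  have hb0 : b ≠ 0 := fun h => by simpa [hb] using congrArg Fin.val h
  set i : Fin (r * (D + 1)) := finProdFinEquiv (a, b) with hi
  set j : Fin (r * (D + 1)) := finProdFinEquiv (a, 0) with hj
  have hij : i ≠ j := fun h => hb0 (Prod.ext_iff.1 (finProdFinEquiv.injective h)).2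
  have hti : blockTuple r D m i = 3 := by simp [blockTuple, hi, hb]
  have htj : blockTuple r D m j = 3 + m a := by simp [blockTuple, hj]
  have hcard : 2 ≤ r * (D + 1) := by
    have h₁ := i.isLt
    have h₂ := j.isLt
    have h₃ : (i : ℕ) ≠ j := fun h => hij (Fin.ext h)
    omega
  refine le_of_eq_of_le (congrArg multiRamsey ?_)
    (hDC _ hcard _ (two_le_blockTuple r D m) i j hij (by omega) (by omega))
  funext x
  obtain ⟨⟨a', b'⟩, rfl⟩ := finProdFinEquiv.surjective x
  rw [hti, htj]
  simp only [blockTuple, hi, hj, Equiv.symm_apply_apply, finProdFinEquiv.injective.eq_iff,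
    Prod.mk.injEq]
  by_cases haa : a' = a
  · subst haa
    by_cases h0 : b' = 0
    · subst h0
      simp [hb0.symm]
      omega
    · have hval : b' = b ↔ (b' : ℕ) = m a' + 1 := by rw [Fin.ext_iff]
      simp only [h0, hval, Function.update_self, true_and, if_false]
      split_ifs <;> omega
  · simp [haa]

lemma multiRamsey_blockTuple_le (hDC : DC) {r D : ℕ} (m : Fin r → ℕ) (hm : ∀ a, m a ≤ D) :
    multiRamsey (blockTuple r D m) ≤ diagRamsey (r * (D + 1)) 3 := by
  induction hs : ∑ a, m a generalizing m with
  | zero =>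
    have h0 : m = 0 := funext fun a => by simpa using (Finset.sum_eq_zero_iff.1 hs) a
    rw [h0, blockTuple_zero, diagRamsey]
  | succ s ih =>
    obtain ⟨a, -, ha⟩ := Finset.exists_ne_zero_of_sum_ne_zero (hs.trans_ne s.succ_ne_zero)
    have hma := hm a
    have hpred : ∀ a', Function.update m a (m a - 1) a' ≤ D := fun a' => by
      by_cases h : a' = a
      · subst h; simp; omega
      · simpa [h] using hm a'
    have hsum : ∑ a', Function.update m a (m a - 1) a' = s := by
      have h₁ := Finset.add_sum_erase Finset.univ m (Finset.mem_univ a)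
      rw [Finset.sum_update_of_mem (Finset.mem_univ a), Finset.sdiff_singleton_eq_erase]
      omega
    have hstep := multiRamsey_blockTuple_update_le hDC (D := D)
      (Function.update m a (m a - 1)) a (by simp; omega)
    have hback : Function.update (Function.update m a (m a - 1)) a
        (Function.update m a (m a - 1) a + 1) = m := by
      rw [Function.update_idem, Function.update_self, Nat.sub_add_cancel (by omega),
        Function.update_eq_self]
    rw [hback] at hstep
    exact hstep.trans (ih _ hpred hsum)

/-- Colors with clique size two may be discarded without changing the Ramsey property. -/
lemma ramseyProp_iff_of_two {r n : ℕ} (k : Fin r → ℕ) (t : Fin n → ℕ) (f : Fin r → Fin n)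
    (p : Fin n → Fin r) (hp : Function.LeftInverse p f) (hf : ∀ a, t (f a) = k a)
    (ht : ∀ x, x ∉ Set.range f → t x = 2) (N : ℕ) : ramseyProp t N ↔ ramseyProp k N := by
  constructor
  · intro h c
    obtain ⟨x, S, hS, hc⟩ := h (f ∘ c)
    by_cases hx : x ∈ Set.range f
    · obtain ⟨a, rfl⟩ := hx
      exact ⟨a, S, hS.trans (hf a), fun u hu v hv huv => hp.injective (hc u hu v hv huv)⟩
    · rw [ht x hx] at hS
      obtain ⟨u, hu, v, hv, huv⟩ := Finset.one_lt_card.1 (by omega : 1 < S.card)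
      exact absurd ⟨_, hc u hu v hv huv⟩ hx
  · intro h c
    by_cases hc : ∀ u v : Fin N, u ≠ v → c s(u, v) ∈ Set.range f
    · obtain ⟨a, S, hS, hmono⟩ := h (p ∘ c)
      refine ⟨f a, S, hS.trans (hf a).symm, fun u hu v hv huv => ?_⟩
      obtain ⟨a', ha'⟩ := hc u v huv
      have := hmono u hu v hv huv
      rw [Function.comp_apply, ← ha', hp] at this
      rw [← ha', this]
    · push Not at hc
      obtain ⟨u, v, huv, hx⟩ := hc
      refine ⟨c s(u, v), {u, v}, (Finset.card_pair huv).trans (ht _ hx).symm, ?_⟩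
      simp only [Finset.mem_insert, Finset.mem_singleton]
      rintro x (rfl | rfl) y (rfl | rfl) hxy
      · exact absurd rfl hxy
      · rfl
      · rw [Sym2.eq_swap]
      · exact absurd rfl hxy

lemma multiRamsey_blockTuple_const (r D : ℕ) :
    multiRamsey (blockTuple r D fun _ => D) = diagRamsey r (3 + D) := by
  have h := ramseyProp_iff_of_two (fun _ : Fin r => 3 + D) (blockTuple r D fun _ => D)
    (fun a => finProdFinEquiv (a, 0)) (fun x => (finProdFinEquiv.symm x).1)
    (fun a => by simp) (fun a => by simp [blockTuple]) (fun x hx => by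
      obtain ⟨⟨a, b⟩, rfl⟩ := finProdFinEquiv.surjective x
      have hb : b ≠ 0 := fun h => hx ⟨a, by rw [h]⟩
      simp [blockTuple, hb, Nat.le_of_lt_succ b.isLt])
  simp only [diagRamsey, multiRamsey, h]

/-- Under DC, `R_r(D + 3) ≤ R_{r (D + 1)}(3)`. -/
lemma diagRamsey_le_of_DC (hDC : DC) (r D : ℕ) :
    diagRamsey r (3 + D) ≤ diagRamsey (r * (D + 1)) 3 :=
  multiRamsey_blockTuple_const r D ▸ multiRamsey_blockTuple_le hDC _ fun _ => le_rfl

/-- if DC holds and `L_3` is finite, then `L_k` is finite for every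
`k ≥ 3`, where `L j` is the limit of `r ↦ R_r(j)^{1/r}` in `[0, ∞]`. -/
theorem stmt6 (hDC : DC) (L : ℕ → ℝ≥0∞)
    (hL : ∀ j, 2 ≤ j →
      Tendsto (fun r : ℕ => ((diagRamsey r j : ℝ≥0∞)) ^ (1 / (r : ℝ))) atTop (𝓝 (L j)))
    (h3 : L 3 ≠ ⊤) :
    ∀ k, 3 ≤ k → L k ≠ ⊤ := by
  intro k hk
  obtain ⟨D, rfl⟩ := Nat.exists_eq_add_of_le hk
  have hmul : Tendsto (fun r : ℕ => r * (D + 1)) atTop atTop :=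
    tendsto_id.atTop_mul_const' D.succ_pos
  have hlim := ((ENNReal.continuous_pow (D + 1)).tendsto _).comp
    ((hL 3 (by norm_num)).comp hmul)
  refine ne_top_of_le_ne_top (ENNReal.pow_ne_top h3 (n := D + 1))
    (le_of_tendsto_of_tendsto' (hL (3 + D) (by omega)) hlim fun r => ?_)
  have hexp : 1 / (((r * (D + 1) : ℕ) : ℝ)) * ((D + 1 : ℕ) : ℝ) = 1 / (r : ℝ) := by
    have : ((D : ℝ) + 1) ≠ 0 := by positivity
    push_cast
    rw [one_div, mul_inv, mul_assoc, inv_mul_cancel₀ this, mul_one, one_div]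
  simp only [Function.comp_apply]
  rw [← ENNReal.rpow_natCast, ← ENNReal.rpow_mul, hexp]
  exact ENNReal.rpow_le_rpow (by exact_mod_cast diagRamsey_le_of_DC hDC r D) (by positivity)
end

section
/- If DC holds and L_k = +∞ for some integer k ≥ 3, then L_3 = +∞. -/
open Filter Topology
open scoped ENNReal

/-- Colors with target clique size `2` can be discarded. -/
theorem ramseyProp_iff_of_eq_two {r n N : ℕ} (hr : 0 < r) (e : Fin r → Fin n)
    (he : Function.Injective e) (t : Fin n → ℕ) (ht : ∀ l, l ∉ Set.range e → t l = 2) :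
    ramseyProp t N ↔ ramseyProp (t ∘ e) N := by
  constructor
  · intro h c
    obtain ⟨l, S, hS, hc⟩ := h (e ∘ c)
    by_cases hl : l ∈ Set.range e
    · obtain ⟨i, rfl⟩ := hl
      exact ⟨i, S, hS, fun u hu v hv huv => he (hc u hu v hv huv)⟩
    · rw [ht l hl] at hS
      obtain ⟨u, v, huv, rfl⟩ := Finset.card_eq_two.mp hS
      exact absurd ⟨_, hc u (by simp) v (by simp) huv⟩ hl
  · intro h c
    by_cases hc : ∀ u v, u ≠ v → c s(u, v) ∈ Set.range e
    · have : Nonempty (Fin r) := ⟨⟨0, hr⟩⟩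
      obtain ⟨i, S, hS, hi⟩ := h (Function.invFun e ∘ c)
      refine ⟨e i, S, hS, fun u hu v hv huv => ?_⟩
      rw [← hi u hu v hv huv]
      exact (Function.invFun_eq (hc u v huv)).symm
    · push Not at hc
      obtain ⟨u, v, huv, hl⟩ := hc
      refine ⟨c s(u, v), {u, v}, by rw [ht _ hl, Finset.card_pair huv], ?_⟩
      intro x hx y hy hxy
      simp only [Finset.mem_insert, Finset.mem_singleton] at hx hy
      rcases hx with rfl | rfl <;> rcases hy with rfl | rfl <;>
        first | exact absurd rfl hxy | rfl | rw [Sym2.eq_swap]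

/-- Under `DC`, starting from `(3, …, 3)`, every color `a ∈ s` may give one unit to the
color `f a ∉ s` without increasing the Ramsey number. -/
theorem DC.multiRamsey_transfer_le (hDC : DC) {n : ℕ} (f : Fin n → Fin n)
    (s : Finset (Fin n)) (hs : ∀ a ∈ s, f a ∉ s) :
    multiRamsey (fun l => if l ∈ s then 2 else 3 + (s.filter (f · = l)).card)
      ≤ diagRamsey n 3 := by
  induction s using Finset.induction_on with
  | empty => simp [diagRamsey]
  | insert a s ha ih =>
    have hfa := hs a (Finset.mem_insert_self a s)
    simp only [Finset.mem_insert, not_or] at hfa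
    have hn : 2 ≤ n := by
      by_contra hn
      exact hfa.1 (Fin.ext (by omega))
    have hsa : s.filter (f · = a) = ∅ := by
      refine Finset.filter_eq_empty_iff.mpr fun b hb hba => ?_
      exact hs b (Finset.mem_insert_of_mem hb) (hba ▸ Finset.mem_insert_self a s)
    refine le_trans (le_of_eq ?_) ((hDC n hn
      (fun l => if l ∈ s then 2 else 3 + (s.filter (f · = l)).card)
      (fun l => by split_ifs <;> omega) a (f a) (Ne.symm hfa.1)
      (by simp [ha]) (by simp [ha, hfa.2, hsa])).trans
        (ih fun b hb h => hs b (Finset.mem_insert_of_mem hb) (Finset.mem_insert_of_mem h)))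
    congr 1
    funext l
    by_cases hla : l = a
    · simp [hla, ha, hsa]
    by_cases hlf : l = f a
    · subst hlf
      simp [hfa.1, hfa.2, Finset.filter_insert, ha, add_assoc]
    · simp [hla, hlf, Finset.filter_insert, Ne.symm hlf]

theorem DC.diagRamsey_le (hDC : DC) {r : ℕ} (hr : 0 < r) (m : ℕ) :
    diagRamsey r (m + 3) ≤ diagRamsey (r * (m + 1)) 3 := by
  let e : Fin r × Fin (m + 1) ≃ Fin (r * (m + 1)) := finProdFinEquiv
  let f : Fin (r * (m + 1)) → Fin (r * (m + 1)) := fun l => e ((e.symm l).1, 0)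
  let s : Finset (Fin (r * (m + 1))) := Finset.univ.filter fun l => (e.symm l).2 ≠ 0
  let t : Fin (r * (m + 1)) → ℕ :=
    fun l => if l ∈ s then 2 else 3 + (s.filter (f · = l)).card
  have hle : multiRamsey t ≤ diagRamsey (r * (m + 1)) 3 :=
    hDC.multiRamsey_transfer_le f s (by simp [s, f])
  have hinj : Function.Injective fun i : Fin r => e (i, 0) := fun i j h => by
    simpa using h
  have htwo : ∀ l, l ∉ Set.range (fun i : Fin r => e (i, 0)) → t l = 2 := by
    intro l hl
    refine if_pos ?_
    simp only [s, Finset.mem_filter, Finset.mem_univ, true_and]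
    exact fun h => hl ⟨(e.symm l).1, by simp [← h]⟩
  have hcomp : (t ∘ fun i : Fin r => e (i, 0)) = fun _ => m + 3 := by
    funext i
    have hcard : s.filter (f · = e (i, 0)) =
        (Finset.univ.filter fun a : Fin (m + 1) => a ≠ 0).map
          ⟨fun a => e (i, a), fun a b h => by simpa using h⟩ := by
      ext l
      obtain ⟨⟨j, a⟩, rfl⟩ := e.surjective l
      simp only [s, f, Finset.mem_filter, Finset.mem_univ, true_and, Finset.mem_map,
        Equiv.symm_apply_apply, EmbeddingLike.apply_eq_iff_eq,
        Prod.mk.injEq, and_true]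
      constructor
      · rintro ⟨ha, rfl⟩
        exact ⟨a, ha, rfl⟩
      · rintro ⟨b, hb, h⟩
        obtain ⟨rfl, rfl⟩ := Prod.mk.inj (e.injective h)
        exact ⟨hb, rfl⟩
    have hnot : e (i, 0) ∉ s := by simp [s]
    simp only [Function.comp_apply, t, if_neg hnot, hcard, Finset.card_map,
      Finset.filter_ne', Finset.card_erase_of_mem (Finset.mem_univ _), Finset.card_univ,
      Fintype.card_fin]
    omega
  refine le_trans (le_of_eq ?_) hle
  unfold diagRamsey multiRamsey
  simp only [ramseyProp_iff_of_eq_two hr _ hinj t htwo, hcomp]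

/-- if DC holds and `L_k = +∞` for some `k ≥ 3`, then `L_3 = +∞`,
where `L j` is the limit of `r ↦ R_r(j)^{1/r}` in `[0, ∞]`. -/
theorem stmt7 (hDC : DC) (L : ℕ → ℝ≥0∞)
    (hL : ∀ j, 2 ≤ j →
      Tendsto (fun r : ℕ => ((diagRamsey r j : ℝ≥0∞)) ^ (1 / (r : ℝ))) atTop (𝓝 (L j)))
    (k : ℕ) (hk : 3 ≤ k) (hktop : L k = ⊤) :
    L 3 = ⊤ := by
  obtain ⟨m, rfl⟩ : ∃ m, k = m + 3 := ⟨k - 3, by omega⟩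
  have hsub : Tendsto (fun r : ℕ => r * (m + 1)) atTop atTop :=
    tendsto_atTop_mono (fun r => Nat.le_mul_of_pos_right r m.succ_pos) tendsto_id
  have hpow := ((ENNReal.continuous_pow (m + 1)).tendsto (L 3)).comp
    ((hL 3 (by norm_num)).comp hsub)
  have hle : L (m + 3) ≤ L 3 ^ (m + 1) := by
    refine le_of_tendsto_of_tendsto (hL (m + 3) (by omega)) hpow ?_
    filter_upwards [eventually_gt_atTop 0] with r hr
    have hexp : 1 / ((r * (m + 1) : ℕ) : ℝ) * ((m + 1 : ℕ) : ℝ) = 1 / (r : ℝ) := by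
      have : (r : ℝ) ≠ 0 := by positivity
      have : (m : ℝ) + 1 ≠ 0 := by positivity
      push_cast
      field_simp
    simp only [Function.comp_apply]
    rw [← ENNReal.rpow_natCast, ← ENNReal.rpow_mul, hexp]
    exact ENNReal.rpow_le_rpow (by exact_mod_cast hDC.diagRamsey_le hr m) (by positivity)
  rw [hktop, top_le_iff] at hle
  exact (ENNReal.pow_eq_top_iff.mp hle).1
end

section
/- For all integers r ≥ 1 and s, t ≥ 2, one has R_r(st + 1) > (R_r(s + 1) − 1) · (R_r(t + 1) − 1). -/
open Filter Topology
open scoped ENNReal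

/-- The Ramsey property of `N` applies to colorings of any vertex type containing `N` vertices. -/
theorem ramseyProp.exists_finset {r N : ℕ} {k : Fin r → ℕ} (h : ramseyProp k N) {V : Type*}
    (f : Fin N ↪ V) (c : Sym2 V → Fin r) :
    ∃ i : Fin r, ∃ S : Finset V,
      S.card = k i ∧ ∀ u ∈ S, ∀ v ∈ S, u ≠ v → c s(u, v) = i := by
  obtain ⟨i, S, hS, hmono⟩ := h fun e => c (e.map f)
  refine ⟨i, S.map f, by simpa using hS, ?_⟩
  intro u hu v hv huv
  obtain ⟨x, hx, rfl⟩ := Finset.mem_map.1 hu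
  obtain ⟨y, hy, rfl⟩ := Finset.mem_map.1 hv
  simpa using hmono x hx y hy fun hxy => huv (congrArg f hxy)

/-- The finite multicolor Ramsey theorem, for finsets in an arbitrary vertex type. -/
theorem exists_forall_card_le_exists_monochromatic {V : Type*} {r : ℕ} (hr : 1 ≤ r)
    (k : Fin r → ℕ) :
    ∃ N : ℕ, ∀ c : Sym2 V → Fin r, ∀ A : Finset V, N ≤ A.card →
      ∃ i : Fin r, ∃ S ⊆ A, S.card = k i ∧ ∀ u ∈ S, ∀ v ∈ S, u ≠ v → c s(u, v) = i := by
  classical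
  induction hn : ∑ i, k i generalizing k with
  | zero =>
    refine ⟨0, fun c A _ => ⟨⟨0, hr⟩, ∅, by simp, ?_, by simp⟩⟩
    simp only [Finset.sum_eq_zero_iff, Finset.mem_univ, true_implies] at hn
    simp [hn]
  | succ n ih =>
    by_cases hzero : ∃ i, k i = 0
    · obtain ⟨i, hi⟩ := hzero
      exact ⟨0, fun c A _ => ⟨i, ∅, by simp, by simp [hi], by simp⟩⟩
    push Not at hzero
    have step (i : Fin r) : ∑ j, Function.update k i (k i - 1) j = n := by
      have h₁ := Finset.sum_update_of_mem (Finset.mem_univ i) k (k i - 1)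
      have h₂ := Finset.add_sum_erase Finset.univ k (Finset.mem_univ i)
      rw [← Finset.erase_eq] at h₁
      have := hzero i
      omega
    choose M hM using fun i => ih (Function.update k i (k i - 1)) (step i)
    refine ⟨1 + ∑ i, M i, fun c A hA => ?_⟩
    obtain ⟨v, hv⟩ : A.Nonempty := Finset.card_pos.1 (by omega)
    obtain ⟨i, hi⟩ : ∃ i, M i ≤ ((A.erase v).filter fun u => c s(v, u) = i).card := by
      by_contra! hlt
      have hsum := Finset.sum_lt_sum_of_nonempty (s := (Finset.univ : Finset (Fin r)))
        ⟨⟨0, hr⟩, Finset.mem_univ _⟩ fun i _ => hlt i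
      rw [← Finset.card_eq_sum_card_fiberwise (by simp), Finset.card_erase_of_mem hv] at hsum
      omega
    obtain ⟨j, S, hSA, hcard, hmono⟩ := hM i c _ hi
    have hS (u : V) (hu : u ∈ S) : u ≠ v ∧ u ∈ A ∧ c s(v, u) = i := by
      simpa [and_assoc] using hSA hu
    by_cases hji : j = i
    · subst hji
      refine ⟨j, insert v S, ?_, ?_, ?_⟩
      · exact Finset.insert_subset hv fun u hu => (hS u hu).2.1
      · rw [Finset.card_insert_of_notMem fun hvS => (hS v hvS).1 rfl, hcard,
          Function.update_self]
        have := hzero j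
        omega
      · intro x hx y hy hxy
        rw [Finset.mem_insert] at hx hy
        rcases hx with rfl | hx <;> rcases hy with rfl | hy
        · exact absurd rfl hxy
        · exact (hS y hy).2.2
        · rw [Sym2.eq_swap]
          exact (hS x hx).2.2
        · exact hmono x hx y hy hxy
    · exact ⟨j, S, fun u hu => (hS u hu).2.1, by simpa [hji] using hcard, hmono⟩

/-- Some positive `N` has the Ramsey property. -/
theorem exists_ramseyProp {r : ℕ} (hr : 1 ≤ r) (k : Fin r → ℕ) :
    ∃ N, 0 < N ∧ ramseyProp k N := by
  obtain ⟨N, hN⟩ := exists_forall_card_le_exists_monochromatic (V := ℕ) hr k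
  refine ⟨N + 1, N.succ_pos, fun c => ?_⟩
  obtain ⟨i, S, hSN, hS, hmono⟩ :=
    hN (fun e => c (e.map (Fin.ofNat (N + 1)))) (Finset.range (N + 1)) (by simp)
  have hinj : Set.InjOn (Fin.ofNat (N + 1)) S := by
    intro x hx y hy hxy
    have hx' := Finset.mem_range.1 (hSN hx)
    have hy' := Finset.mem_range.1 (hSN hy)
    simpa [Fin.ext_iff, Nat.mod_eq_of_lt hx', Nat.mod_eq_of_lt hy'] using hxy
  refine ⟨i, S.image (Fin.ofNat (N + 1)), by rw [Finset.card_image_of_injOn hinj, hS], ?_⟩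
  intro u hu v hv huv
  obtain ⟨x, hx, rfl⟩ := Finset.mem_image.1 hu
  obtain ⟨y, hy, rfl⟩ := Finset.mem_image.1 hv
  exact hmono x hx y hy fun hxy => huv (congrArg _ hxy)

/-- The number `R_r(k)` has the Ramsey property. -/
theorem ramseyProp_diagRamsey {r : ℕ} (hr : 1 ≤ r) (k : ℕ) :
    ramseyProp (fun _ : Fin r => k) (diagRamsey r k) :=
  (Nat.sInf_mem (exists_ramseyProp hr fun _ => k)).2

/-- On `R_r(m + 1) - 1` vertices there is a coloring whose monochromatic sets have at most `m`
vertices. -/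
theorem exists_coloring_card_le (r m : ℕ) :
    ∃ c : Sym2 (Fin (diagRamsey r (m + 1) - 1)) → Fin r, ∀ i, ∀ S : Finset _,
      (∀ u ∈ S, ∀ v ∈ S, u ≠ v → c s(u, v) = i) → S.card ≤ m := by
  have hnot : ¬ ramseyProp (fun _ : Fin r => m + 1) (diagRamsey r (m + 1) - 1) := by
    intro h
    rcases Nat.eq_zero_or_pos (diagRamsey r (m + 1) - 1) with h0 | hpos
    · rw [h0] at h
      obtain ⟨i, S, hS, -⟩ := h isEmptyElim
      simp [Finset.eq_empty_of_isEmpty S] at hS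
    · have hle : diagRamsey r (m + 1) ≤ diagRamsey r (m + 1) - 1 := Nat.sInf_le ⟨hpos, h⟩
      omega
  unfold ramseyProp at hnot
  push Not at hnot
  obtain ⟨c, hc⟩ := hnot
  refine ⟨c, fun i S hS => ?_⟩
  by_contra! hlt
  obtain ⟨T, hTS, hT⟩ := Finset.exists_subset_card_eq (Nat.succ_le_of_lt hlt)
  obtain ⟨u, hu, v, hv, huv, hne⟩ := hc i T hT
  exact hne (hS u (hTS hu) v (hTS hv) huv)

/-- `R_r(st + 1) > (R_r(s + 1) − 1) · (R_r(t + 1) − 1)`. -/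
theorem stmt8 (r s t : ℕ) (hr : 1 ≤ r) (hs : 2 ≤ s) (ht : 2 ≤ t) :
    (diagRamsey r (s + 1) - 1) * (diagRamsey r (t + 1) - 1) < diagRamsey r (s * t + 1) := by
  classical
  obtain ⟨c, hc⟩ := exists_coloring_card_le r s
  obtain ⟨d, hd⟩ := exists_coloring_card_le r t
  by_contra! hle
  let f := (Fin.castLEEmb hle).trans finProdFinEquiv.symm.toEmbedding
  obtain ⟨i, S, hS, hmono⟩ := (ramseyProp_diagRamsey hr (s * t + 1)).exists_finset f
    fun e => if (e.map Prod.fst).IsDiag then d (e.map Prod.snd) else c (e.map Prod.fst)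
  simp only [Sym2.map_mk, Sym2.mk_isDiag_iff] at hmono
  have hfst : (S.image Prod.fst).card ≤ s := by
    refine hc i _ fun x hx y hy hxy => ?_
    obtain ⟨p, hp, rfl⟩ := Finset.mem_image.1 hx
    obtain ⟨q, hq, rfl⟩ := Finset.mem_image.1 hy
    simpa [hxy] using hmono p hp q hq fun hpq => hxy (congrArg Prod.fst hpq)
  have hfiber (x) : (S.filter fun p => p.1 = x).card ≤ t := by
    rw [← Finset.card_image_of_injOn (f := Prod.snd)]
    · refine hd i _ fun y hy z hz hyz => ?_
      obtain ⟨p, hp, rfl⟩ := Finset.mem_image.1 hy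
      obtain ⟨q, hq, rfl⟩ := Finset.mem_image.1 hz
      rw [Finset.mem_filter] at hp hq
      simpa [hp.2, hq.2] using hmono p hp.1 q hq.1 fun hpq => hyz (congrArg Prod.snd hpq)
    · intro p hp q hq hpq
      simp only [Finset.coe_filter, Set.mem_ofPred_eq] at hp hq
      exact Prod.ext (hp.2.trans hq.2.symm) hpq
  have hcard : S.card ≤ t * (S.image Prod.fst).card :=
    Finset.card_le_mul_card_image S t fun x _ => hfiber x
  have := Nat.mul_le_mul_left t hfst
  rw [mul_comm t s] at this
  omega
end
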